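/- arXiv:1911.03994 — 2 statements merged into one kernel-verified Lean document; each statement's English description precedes it below -/
import Mathlib

section
/- Let Γ be an n×n Hermitian positive definite complex matrix and σ² > 0. Then the average MMSE of the real-only equalizer is at most that of the linear equalizer: Re[(σ²/(4ν))·tr((2A(Γ + BΓᵀB)A† + (σ²/2)I)⁻¹)] ≤ Re[(σ²/(2ν))·tr((Γ + σ²I)⁻¹)]. -/
open Matrix ComplexOrder

noncomputable def Amat (ν : ℕ) : Matrix (Fin (2*ν)) (Fin (2*ν)) ℂ :=
  Matrix.diagonal (fun i => if Even (i : ℕ) then (1/2 : ℂ) else -Complex.I/2)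

noncomputable def Bmat (ν : ℕ) : Matrix (Fin (2*ν)) (Fin (2*ν)) ℂ :=
  Matrix.diagonal (fun i => (-1 : ℂ) ^ (i : ℕ))

/-!
Both errors are values of one functional, the normalized trace `s / n * tr (G + s)⁻¹`: the linear
equalizer has signal matrix `G = Γ` and noise `s = σ²`, while the real-only equalizer sees only half
of the noise power, `s = σ² / 2`. This functional is invariant under similarity and under scaling
`G` and `s` together. Since `2A` is unitary, `2A S A†` is half of a unitary conjugate of `S`, so the
real-only equalizer has the error of the linear one with `Γ` replaced by `Γ + BΓᵀB`. The extra term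
is positive semidefinite, and the functional is antitone in `G` because inversion is operator
antitone.
-/

theorem matrix_inv_smul₀ {K m : Type*} [Field K] [Fintype m] [DecidableEq m] {c : K} (hc : c ≠ 0)
    (M : Matrix m m K) : (c • M)⁻¹ = c⁻¹ • M⁻¹ := by
  have hscalar : (c • (1 : Matrix m m K))⁻¹ = c⁻¹ • 1 := by
    simpa using! inv_smul' (1 : Matrix m m K) (Units.mk0 c hc) (by simp)
  calc (c • M)⁻¹ = (M * c • 1)⁻¹ := by rw [mul_smul_one]
    _ = c⁻¹ • M⁻¹ := by rw [Matrix.mul_inv_rev, hscalar, smul_one_mul]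

section AvgMMSE

open scoped MatrixOrder

variable {𝕜 m : Type*} [RCLike 𝕜] [Fintype m] [DecidableEq m]

/-- The average minimum mean-square error of the linear equalizer for the signal matrix `G` and
white noise of variance `s`. Variance and error are real quantities, but both are taken in `𝕜` to
avoid coercions. -/
noncomputable def avgMMSE (s : 𝕜) (G : Matrix m m 𝕜) : 𝕜 :=
  s / Fintype.card m * ((G + s • 1)⁻¹).trace

theorem avgMMSE_smul_smul {c : 𝕜} (hc : c ≠ 0) (s : 𝕜) (G : Matrix m m 𝕜) :
    avgMMSE (c * s) (c • G) = avgMMSE s G := by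
  rw [avgMMSE, avgMMSE, mul_smul, ← smul_add, matrix_inv_smul₀ hc, trace_smul, smul_eq_mul]
  field_simp

theorem avgMMSE_conj {U : Matrix m m 𝕜} (hU : IsUnit U) (s : 𝕜) (G : Matrix m m 𝕜) :
    avgMMSE s (U * G * U⁻¹) = avgMMSE s G := by
  have hdet : IsUnit U.det := (isUnit_iff_isUnit_det U).mp hU
  have hshift : U * G * U⁻¹ + s • 1 = U * (G + s • 1) * U⁻¹ := by
    rw [Matrix.mul_add, Matrix.add_mul, mul_smul_one, smul_mul_assoc, mul_nonsing_inv U hdet]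
  rw [avgMMSE, avgMMSE, hshift, Matrix.mul_inv_rev, Matrix.mul_inv_rev,
    nonsing_inv_nonsing_inv U hdet, ← Matrix.mul_assoc, trace_conj hU]

theorem avgMMSE_half_two_smul_conj {A : Matrix m m 𝕜} (hA : (2 : 𝕜) • A ∈ unitaryGroup m 𝕜)
    (s : 𝕜) (S : Matrix m m 𝕜) :
    avgMMSE (s / 2) ((2 : 𝕜) • (A * S * Aᴴ)) = avgMMSE s S := by
  set U := (2 : 𝕜) • A with hU
  have hinv : U⁻¹ = (2 : 𝕜) • Aᴴ := by
    rw [inv_eq_right_inv (mem_unitaryGroup_iff.mp hA), hU, star_smul, star_ofNat,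
      star_eq_conjTranspose]
  have hunit : IsUnit U := IsUnit.of_mul_eq_one _ (mem_unitaryGroup_iff.mp hA)
  have hconj : (2 : 𝕜) • (A * S * Aᴴ) = (2⁻¹ : 𝕜) • (U * S * U⁻¹) := by
    rw [hinv, hU]
    simp only [smul_mul_assoc, mul_smul_comm, smul_smul]
    norm_num
  rw [hconj, div_eq_inv_mul, avgMMSE_smul_smul (by norm_num), avgMMSE_conj hunit]

open scoped Matrix.Norms.L2Operator in
theorem matrix_inv_le_inv {M N : Matrix m m ℂ} (hM : M.PosDef) (hMN : M ≤ N) : N⁻¹ ≤ M⁻¹ := by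
  simpa only [nonsing_inv_eq_ringInverse] using
    CStarAlgebra.ringInverse_le_ringInverse hMN hM.isStrictlyPositive

theorem avgMMSE_antitoneOn {s : ℂ} (hs : 0 < s) :
    AntitoneOn (avgMMSE s) {G : Matrix m m ℂ | G.PosSemidef} := by
  intro G hG H _ hGH
  have hpos : (G + s • 1).PosDef := .posSemidef_add hG (PosDef.one.smul hs)
  have hinv : (H + s • 1)⁻¹ ≤ (G + s • 1)⁻¹ := matrix_inv_le_inv hpos (by gcongr)
  have htrace : ((H + s • 1)⁻¹).trace ≤ ((G + s • 1)⁻¹).trace :=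
    OrderHomClass.mono (tracePositiveLinearMap m ℂ ℂ) hinv
  have hcoeff : 0 ≤ s / Fintype.card m := div_nonneg hs.le (Nat.cast_nonneg _)
  exact mul_le_mul_of_nonneg_left htrace hcoeff

theorem mmse_roe_le_mmse_le_general {s : ℂ} (hs : 0 < s) {A B Γ : Matrix m m ℂ}
    (hA : (2 : ℂ) • A ∈ unitaryGroup m ℂ) (hB : B.IsHermitian) (hΓ : Γ.PosSemidef) :
    avgMMSE (s / 2) ((2 : ℂ) • (A * (Γ + B * Γᵀ * B) * Aᴴ)) ≤ avgMMSE s Γ := by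
  have hP : (B * Γᵀ * B).PosSemidef := by
    simpa only [hB.eq] using hΓ.transpose.mul_mul_conjTranspose_same B
  rw [avgMMSE_half_two_smul_conj hA]
  exact avgMMSE_antitoneOn hs hΓ (hΓ.add hP) (le_add_of_nonneg_right hP.nonneg)

end AvgMMSE

theorem two_smul_Amat_mem_unitaryGroup (ν : ℕ) :
    (2 : ℂ) • Amat ν ∈ unitaryGroup (Fin (2 * ν)) ℂ := by
  rw [mem_unitaryGroup_iff, star_eq_conjTranspose, Amat, ← diagonal_smul, diagonal_conjTranspose,
    diagonal_mul_diagonal, diagonal_eq_one]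
  funext i
  by_cases hi : Even (i : ℕ) <;> simp [hi, mul_div_cancel₀]

theorem Bmat_isHermitian (ν : ℕ) : (Bmat ν).IsHermitian :=
  isHermitian_diagonal_iff.mpr fun _ ↦ (IsSelfAdjoint.one ℂ).neg.pow _

theorem mmse_roe_le_mmse_le (ν : ℕ) (hν : 1 ≤ ν) (σ2 : ℝ) (hσ : 0 < σ2)
    (A B : Matrix (Fin (2*ν)) (Fin (2*ν)) ℂ)
    (hA : A = Amat ν) (hB : B = Bmat ν)
    (Γ : Matrix (Fin (2*ν)) (Fin (2*ν)) ℂ) (hΓ : Γ.PosDef) :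
    (((σ2 : ℂ)/(4*ν)) *
      (((2:ℂ) • (A * (Γ + B * Γᵀ * B) * Aᴴ) + ((σ2 : ℂ)/2) • 1)⁻¹).trace).re ≤
    (((σ2 : ℂ)/(2*ν)) * ((Γ + (σ2 : ℂ) • 1)⁻¹).trace).re := by
  subst hA hB
  have hle := mmse_roe_le_mmse_le_general (Complex.zero_lt_real.mpr hσ)
    (two_smul_Amat_mem_unitaryGroup ν) (Bmat_isHermitian ν) hΓ.posSemidef
  have hcoeff : (σ2 : ℂ) / 2 / (2 * ν) = σ2 / (4 * ν) := by ring
  simpa only [avgMMSE, Fintype.card_fin, Nat.cast_mul, Nat.cast_ofNat, hcoeff] using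
    (Complex.le_def.mp hle).1
end

section
/- Let Γ be an n×n Hermitian complex matrix such that S = BΓᵀB + Γ + σ²I is invertible, and set C = S⁻¹ and D = CB. Then the second widely linear orthogonality condition holds: D*(Γ + σ²I)Γ + C*·(ΓᵀBΓ) = BΓ, where C* and D* denote the entrywise complex conjugates of C and D. -/
open Matrix

/-! Conjugation exchanges `Γ` and `Γᵀ` and fixes `B` and `σ²`, so conjugating `C S = 1` shows that
`C*` is a left inverse of `S* = B Γ B + Γᵀ + σ² I`. As `B² = 1`, multiplying `S*` on the right by
`B Γ` gives `B (Γ + σ² I) Γ + Γᵀ B Γ`, and applying `C*` to this identity, with `D* = C* B`, is the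
orthogonality condition. -/

theorem map_starRingEnd_eq_transpose {n R : Type*} [CommSemiring R] [StarRing R]
    {Γ : Matrix n n R} (hΓ : Γ.IsHermitian) : Γ.map (starRingEnd R) = Γᵀ :=
  Matrix.ext fun i j => hΓ.apply j i

section WidelyLinear

variable {n R : Type*} [Fintype n] [DecidableEq n] [CommSemiring R]

/-- The matrix `S` of the widely linear problem, whose inverse is the coefficient matrix `C`;
`s` plays the role of `σ²`. -/
def wleMatrix (B Γ : Matrix n n R) (s : R) : Matrix n n R :=
  B * Γᵀ * B + Γ + s • 1

theorem wleMatrix_transpose_mul {B : Matrix n n R} (hB : B * B = 1) (Γ : Matrix n n R) (s : R) :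
    wleMatrix B Γᵀ s * (B * Γ) = B * (Γ + s • 1) * Γ + Γᵀ * B * Γ := by
  have cancel_B : B * Γ * B * (B * Γ) = B * Γ * Γ := by
    rw [Matrix.mul_assoc (B * Γ), ← Matrix.mul_assoc B B, hB, Matrix.one_mul]
  calc wleMatrix B Γᵀ s * (B * Γ)
      = B * Γ * B * (B * Γ) + Γᵀ * (B * Γ) + s • (B * Γ) := by
        simp only [wleMatrix, transpose_transpose, Matrix.add_mul, Matrix.smul_mul, Matrix.one_mul]
    _ = B * Γ * Γ + s • (B * Γ) + Γᵀ * B * Γ := by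
        rw [cancel_B, Matrix.mul_assoc Γᵀ, add_right_comm]
    _ = B * (Γ + s • 1) * Γ + Γᵀ * B * Γ := by
        simp only [Matrix.mul_add, Matrix.add_mul, Matrix.mul_smul, Matrix.smul_mul, Matrix.mul_one]

variable [StarRing R]

theorem wleMatrix_map_starRingEnd {B Γ : Matrix n n R} {s : R}
    (hB : B.map (starRingEnd R) = B) (hΓ : Γ.IsHermitian) (hs : IsSelfAdjoint s) :
    (wleMatrix B Γ s).map (starRingEnd R) = wleMatrix B Γᵀ s := by
  have conj_s : starRingEnd R s = s := hs
  rw [wleMatrix, wleMatrix, Matrix.map_add _ (map_add _), Matrix.map_add _ (map_add _),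
    Matrix.map_mul, Matrix.map_mul, hB, map_starRingEnd_eq_transpose hΓ.transpose,
    map_starRingEnd_eq_transpose hΓ, Matrix.map_smul' _ _ _ (map_mul _), conj_s,
    Matrix.map_one _ (map_zero _) (map_one _)]

theorem wle_second_orthogonality_general {B Γ C : Matrix n n R} {s : R}
    (hBB : B * B = 1) (hB : B.map (starRingEnd R) = B) (hΓ : Γ.IsHermitian)
    (hs : IsSelfAdjoint s) (hC : C * wleMatrix B Γ s = 1) :
    (C * B).map (starRingEnd R) * (Γ + s • 1) * Γ +
      C.map (starRingEnd R) * (Γᵀ * B * Γ) = B * Γ := by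
  have conj_left_inverse : C.map (starRingEnd R) * wleMatrix B Γᵀ s = 1 := by
    rw [← wleMatrix_map_starRingEnd hB hΓ hs, ← Matrix.map_mul, hC,
      Matrix.map_one _ (map_zero _) (map_one _)]
  calc (C * B).map (starRingEnd R) * (Γ + s • 1) * Γ + C.map (starRingEnd R) * (Γᵀ * B * Γ)
      = C.map (starRingEnd R) * (B * (Γ + s • 1) * Γ + Γᵀ * B * Γ) := by
        rw [Matrix.map_mul, hB, Matrix.mul_add (C.map _)]
        simp only [Matrix.mul_assoc]
    _ = C.map (starRingEnd R) * (wleMatrix B Γᵀ s * (B * Γ)) := by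
        rw [wleMatrix_transpose_mul hBB]
    _ = B * Γ := by
        rw [← Matrix.mul_assoc, conj_left_inverse, Matrix.one_mul]

end WidelyLinear

theorem Bmat_mul_self (ν : ℕ) : Bmat ν * Bmat ν = 1 := by
  simp [Bmat, ← mul_pow]

theorem Bmat_map_starRingEnd (ν : ℕ) : (Bmat ν).map (starRingEnd ℂ) = Bmat ν := by
  simp [Bmat, diagonal_map]

theorem wle_second_orthogonality (ν : ℕ) (hν : 1 ≤ ν) (σ2 : ℝ) (hσ : 0 < σ2)
    (B : Matrix (Fin (2*ν)) (Fin (2*ν)) ℂ) (hB : B = Bmat ν)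
    (Γ : Matrix (Fin (2*ν)) (Fin (2*ν)) ℂ) (hΓ : Γ.IsHermitian)
    (hS : IsUnit (B * Γᵀ * B + Γ + (σ2 : ℂ) • 1))
    (C D : Matrix (Fin (2*ν)) (Fin (2*ν)) ℂ)
    (hC : C = (B * Γᵀ * B + Γ + (σ2 : ℂ) • 1)⁻¹)
    (hD : D = C * B) :
    (D.map (starRingEnd ℂ)) * (Γ + (σ2 : ℂ) • 1) * Γ +
      (C.map (starRingEnd ℂ)) * (Γᵀ * B * Γ) = B * Γ := by
  subst hB hC hD
  exact wle_second_orthogonality_general (Bmat_mul_self ν) (Bmat_map_starRingEnd ν) hΓ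
    (Complex.conj_ofReal σ2) (nonsing_inv_mul _ ((isUnit_iff_isUnit_det _).mp hS))
end
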